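/- Fix a model size D > 0, M edge nodes with fronthaul capacities B^fr_m > 0 and backhaul capacities B^bk_m > 0, and a fixed assignment a : {1,…,K} → {1,…,M} of K users to edge nodes; let n_m be the number of users assigned to edge node m. For each m define g_m = D·n_m/B^fr_m + min(D/B^bk_m, n_m·D/B^bk_m) if n_m ≥ 1, and g_m = 0 if n_m = 0. Then max_{m} g_m is the least element of the set of network aggregation latencies { max_m T_m(r) : r is a feasible rate allocation }, where T_m(r) = max_{k : a(k)=m} (D/r_k) + min(D/B^bk_m, n_m·D/B^bk_m) if n_m ≥ 1 and T_m(r) = 0 otherwise, and feasibility means r_k > 0 for every user k and Σ_{k : a(k)=m} r_k ≤ B^fr_m for every m; the minimum is attained when every edge node m with n_m ≥ 1 splits its fronthaul bandwidth equally, r_k = B^fr_m/n_m for all k with a(k) = m. (Reduction of problem P1 to problem P2 for a fixed association matrix.) -/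

import Mathlib

/-! Among the `n` users of an edge node whose rates sum to at most `B`, some user has rate at most
`B / n`, so the slowest upload takes at least `D / (B / n)`; equal rates achieve this. The backhaul
latency does not depend on the rates, so the equal split minimizes the latencies of all edge nodes
simultaneously, and hence every monotone function of them, such as their maximum. -/

section FairRates

open Finset

theorem mul_card_div_le_sup'_div {ι 𝕜 : Type*} [Field 𝕜] [LinearOrder 𝕜]
    [IsStrictOrderedRing 𝕜] {s : Finset ι} (hs : s.Nonempty) {D B : 𝕜} (hD : 0 ≤ D)
    {r : ι → 𝕜} (hr : ∀ k ∈ s, 0 < r k) (hsum : ∑ k ∈ s, r k ≤ B) :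
    D * #s / B ≤ s.sup' hs (fun k => D / r k) := by
  have hcard : (#s : 𝕜) ≠ 0 := Nat.cast_ne_zero.mpr hs.card_ne_zero
  have hle : ∑ k ∈ s, r k ≤ ∑ _k ∈ s, B / #s := by
    rwa [sum_const, nsmul_eq_mul, mul_div_cancel₀ _ hcard]
  obtain ⟨k, hk, hrk⟩ := exists_le_of_sum_le hs hle
  calc D * #s / B = D / (B / #s) := (div_div_eq_mul_div ..).symm
    _ ≤ D / r k := div_le_div_of_nonneg_left hD (hr k hk) hrk
    _ ≤ s.sup' hs (fun k => D / r k) := le_sup' (fun k => D / r k) hk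

variable {ι κ 𝕜 : Type*} [Fintype ι] [DecidableEq κ]

/-- The users that the assignment `a` sends to the edge node `m`. -/
def assignedUsers (a : ι → κ) (m : κ) : Finset ι :=
  {k | a k = m}

theorem mem_assignedUsers {a : ι → κ} {m : κ} {k : ι} : k ∈ assignedUsers a m ↔ a k = m := by
  simp [assignedUsers]

variable [Field 𝕜]

/-- The fair allocation, in which every edge node splits its fronthaul capacity equally among
its users. -/
def fairRate (B : κ → 𝕜) (a : ι → κ) (k : ι) : 𝕜 :=
  B (a k) / #(assignedUsers a (a k))

theorem fairRate_of_mem_assignedUsers (B : κ → 𝕜) {a : ι → κ} {m : κ} {k : ι}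
    (hk : k ∈ assignedUsers a m) : fairRate B a k = B m / #(assignedUsers a m) := by
  rw [fairRate, mem_assignedUsers.mp hk]

variable [LinearOrder 𝕜]

/-- The rate allocations that are admissible for the assignment `a` and the fronthaul
capacities `B`. -/
def feasibleRates (B : κ → 𝕜) (a : ι → κ) : Set (ι → 𝕜) :=
  {r | (∀ k, 0 < r k) ∧ ∀ m, ∑ k ∈ assignedUsers a m, r k ≤ B m}

/-- The aggregation latency of each edge node under the rates `r`: the slowest upload of a model
of size `D`, followed by the backhaul. The backhaul latency `c m` of the edge node `m` is an
arbitrary number, since it is not affected by the rates. -/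
def nodeLatency (D : 𝕜) (c : κ → 𝕜) (a : ι → κ) (r : ι → 𝕜) (m : κ) : 𝕜 :=
  if h : (assignedUsers a m).Nonempty then
    (assignedUsers a m).sup' h (fun k => D / r k) + c m
  else 0

/-- The closed form `g` of the latency of each edge node under the fair allocation. -/
def fairLatency (D : 𝕜) (B c : κ → 𝕜) (a : ι → κ) (m : κ) : 𝕜 :=
  if 1 ≤ #(assignedUsers a m) then D * #(assignedUsers a m) / B m + c m else 0

theorem nodeLatency_fairRate (D : 𝕜) (B c : κ → 𝕜) (a : ι → κ) :
    nodeLatency D c a (fairRate B a) = fairLatency D B c a := by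
  funext m
  by_cases h : (assignedUsers a m).Nonempty
  · have hupload : ∀ k ∈ assignedUsers a m,
        D / fairRate B a k = D * #(assignedUsers a m) / B m := fun k hk => by
      rw [fairRate_of_mem_assignedUsers B hk, div_div_eq_mul_div]
    rw [nodeLatency, fairLatency, dif_pos h, if_pos (one_le_card.mpr h),
      sup'_congr h rfl hupload, sup'_const]
  · rw [nodeLatency, fairLatency, dif_neg h, if_neg (one_le_card.not.mpr h)]

variable [IsStrictOrderedRing 𝕜]

theorem fairRate_mem_feasibleRates {B : κ → 𝕜} (hB : ∀ m, 0 < B m) (a : ι → κ) :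
    fairRate B a ∈ feasibleRates B a := by
  refine ⟨fun k => ?_, fun m => ?_⟩
  · have hcard : 0 < #(assignedUsers a (a k)) := card_pos.mpr ⟨k, mem_assignedUsers.mpr rfl⟩
    exact div_pos (hB (a k)) (Nat.cast_pos.mpr hcard)
  · calc ∑ k ∈ assignedUsers a m, fairRate B a k
        = #(assignedUsers a m) * (B m / #(assignedUsers a m)) := by
          rw [sum_congr rfl fun _ => fairRate_of_mem_assignedUsers B, sum_const, nsmul_eq_mul]
      _ = B m * (#(assignedUsers a m) / #(assignedUsers a m)) := mul_div_left_comm ..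
      _ ≤ B m := mul_le_of_le_one_right (hB m).le (div_self_le_one _)

theorem fairLatency_le_nodeLatency {D : 𝕜} (hD : 0 ≤ D) {B : κ → 𝕜} (c : κ → 𝕜) {a : ι → κ}
    {r : ι → 𝕜} (hr : r ∈ feasibleRates B a) : fairLatency D B c a ≤ nodeLatency D c a r := by
  intro m
  by_cases h : (assignedUsers a m).Nonempty
  · rw [nodeLatency, fairLatency, dif_pos h, if_pos (one_le_card.mpr h)]
    gcongr
    exact mul_card_div_le_sup'_div h hD (fun k _ => hr.1 k) (hr.2 m)
  · rw [nodeLatency, fairLatency, dif_neg h, if_neg (one_le_card.not.mpr h)]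

theorem fixed_assignment_fair_rates_optimal_general {α : Type*} [Preorder α]
    {F : (κ → 𝕜) → α} (hF : Monotone F) {D : 𝕜} (hD : 0 ≤ D) {B : κ → 𝕜} (hB : ∀ m, 0 < B m)
    (c : κ → 𝕜) (a : ι → κ) :
    IsLeast {x | ∃ r ∈ feasibleRates B a, x = F (nodeLatency D c a r)} (F (fairLatency D B c a)) ∧
      F (nodeLatency D c a (fairRate B a)) = F (fairLatency D B c a) := by
  have hfair := congrArg F (nodeLatency_fairRate D B c a)
  refine ⟨⟨⟨fairRate B a, fairRate_mem_feasibleRates hB a, hfair.symm⟩, ?_⟩, hfair⟩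
  rintro _ ⟨r, hr, rfl⟩
  exact hF (fairLatency_le_nodeLatency hD c hr)

end FairRates

/-- Reduction of problem P1 to problem P2 for a fixed association: fix model size `D > 0`,
`M ≥ 1` edge nodes with fronthaul capacities `Bfr m > 0` and backhaul capacities
`Bbk m > 0`, and a fixed assignment `a` of `K` users to edge nodes with occupancy numbers
`nn m`.  With `g m = D·nn m/Bfr m + min (D/Bbk m) (nn m·D/Bbk m)` when `nn m ≥ 1` and
`g m = 0` otherwise, the value `max_m g m` is the least element of the set of network
aggregation latencies `max_m T r m` over all feasible rate allocations `r`
(`r k > 0` for every `k`, and at each edge node the rates sum to at most its fronthaul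
capacity); the minimum is attained by the fair allocation `r k = Bfr (a k) / nn (a k)`. -/
theorem fixed_assignment_fair_rates_optimal
    (K M : ℕ) (hM : 0 < M) (D : ℝ) (hD : 0 < D)
    (Bfr Bbk : Fin M → ℝ) (hBfr : ∀ m, 0 < Bfr m) (hBbk : ∀ m, 0 < Bbk m)
    (a : Fin K → Fin M)
    (nn : Fin M → ℕ)
    (hnn : ∀ m, nn m = (Finset.univ.filter (fun k => a k = m)).card)
    (g : Fin M → ℝ)
    (hg : ∀ m, g m = if 1 ≤ nn m then
        D * (nn m : ℝ) / Bfr m + min (D / Bbk m) ((nn m : ℝ) * D / Bbk m)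
      else 0)
    (T : (Fin K → ℝ) → Fin M → ℝ)
    (hT : ∀ r m, T r m =
      if h : (Finset.univ.filter (fun k => a k = m)).Nonempty then
        (Finset.univ.filter (fun k => a k = m)).sup' h (fun k => D / r k)
          + min (D / Bbk m) ((nn m : ℝ) * D / Bbk m)
      else 0) :
    IsLeast
      { x : ℝ | ∃ r : Fin K → ℝ, (∀ k, 0 < r k) ∧
          (∀ m, ∑ k ∈ Finset.univ.filter (fun k => a k = m), r k ≤ Bfr m) ∧
          x = Finset.univ.sup'
                (Finset.univ_nonempty_iff.mpr (Fin.pos_iff_nonempty.mp hM)) (T r) }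
      (Finset.univ.sup'
        (Finset.univ_nonempty_iff.mpr (Fin.pos_iff_nonempty.mp hM)) g)
    ∧ Finset.univ.sup'
        (Finset.univ_nonempty_iff.mpr (Fin.pos_iff_nonempty.mp hM))
        (T (fun k => Bfr (a k) / (nn (a k) : ℝ)))
      = Finset.univ.sup'
          (Finset.univ_nonempty_iff.mpr (Fin.pos_iff_nonempty.mp hM)) g := by
  obtain rfl := funext hnn
  obtain rfl := funext hg
  obtain rfl := funext₂ hT
  simp only [← and_assoc]
  exact fixed_assignment_fair_rates_optimal_general
    (fun _ _ hle => Finset.sup'_mono_fun fun m _ => hle m) hD.le hBfr _ a
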